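/- Suppose W isolates a size-k common independent set I_k of matroids M₁ and M₂, let s ∈ S, and suppose the exchange graph 𝓔(M₁,M₂,I_k) contains a directed cycle through s. Let C* be a directed cycle through s of minimum weight, and of minimum hop-length among the directed cycles through s of minimum weight. Then I_k Δ V(C*) (the symmetric difference of I_k with the vertex set of C*) is a common independent set of size k, and it attains the minimum of W(I) over all size-k common independent sets I with s ∈ I Δ I_k. -/

import Mathlib

/-- `I` is a common independent set of the matroids `M₁` and `M₂`. -/
def CommonIndep {α : Type*} (M₁ M₂ : Matroid α) (I : Finset α) : Prop :=
  M₁.Indep ↑I ∧ M₂.Indep ↑I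

/-- The weight `W(I) = ∑_{s ∈ I} W(s)` of a set. -/
def setW {α : Type*} (W : α → ℤ) (I : Finset α) : ℤ := ∑ x ∈ I, W x

/-- Adjacency in the exchange graph `𝓔(M₁,M₂,I)`: for `y ∈ I` and `x ∉ I` there is an
edge `(y,x)` iff `(I \ {y}) ∪ {x} ∈ 𝓘₁`, and an edge `(x,y)` iff `(I \ {y}) ∪ {x} ∈ 𝓘₂`. -/
def ExchAdj {α : Type*} [DecidableEq α] (M₁ M₂ : Matroid α) (I : Finset α) (u v : α) : Prop :=
  (u ∈ I ∧ v ∉ I ∧ M₁.Indep ↑(insert v (I.erase u))) ∨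
  (u ∉ I ∧ v ∈ I ∧ M₂.Indep ↑(insert u (I.erase v)))

/-- The vertex weights of the exchange graph: `l(s) = -W(s)` if `s ∈ I`, else `l(s) = W(s)`. -/
def exchWt {α : Type*} [DecidableEq α] (W : α → ℤ) (I : Finset α) (s : α) : ℤ :=
  if s ∈ I then -W s else W s

/-- The weight of a walk/path/cycle given by the vertex list `l`: the sum of the vertex
weights over `l`. -/
def listW {α : Type*} [DecidableEq α] (W : α → ℤ) (I : Finset α) (l : List α) : ℤ :=
  (l.map (exchWt W I)).sum

/-- `l` is (the vertex list of) a simple directed cycle for the adjacency relation `Adj`. -/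
def IsCycle {α : Type*} (Adj : α → α → Prop) (l : List α) : Prop :=
  ∃ h : l ≠ [], l.Chain' Adj ∧ Adj (l.getLast h) (l.head h) ∧ l.Nodup

/-- `x ∈ X₁`, i.e. `x ∉ I` and `I ∪ {x} ∈ 𝓘₁` (and analogously for `X₂` with `M₂`). -/
def memX {α : Type*} [DecidableEq α] (M : Matroid α) (I : Finset α) (x : α) : Prop :=
  x ∉ I ∧ M.Indep ↑(insert x I)

/-- `l` is (the vertex list of) a simple directed path from `X₁` to `X₂` in the exchange
graph `𝓔(M₁,M₂,I)`. -/
def IsXPath {α : Type*} [DecidableEq α] (M₁ M₂ : Matroid α) (I : Finset α) (l : List α) : Prop :=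
  ∃ h : l ≠ [], l.Chain' (ExchAdj M₁ M₂ I) ∧ l.Nodup ∧
    memX M₁ I (l.head h) ∧ memX M₂ I (l.getLast h)

/-- `I` is a minimum-weight common independent set of size `k` (not necessarily unique). -/
def IsMinWtOfSize {α : Type*} (M₁ M₂ : Matroid α) (W : α → ℤ) (k : ℕ) (I : Finset α) : Prop :=
  CommonIndep M₁ M₂ I ∧ I.card = k ∧
    ∀ J : Finset α, CommonIndep M₁ M₂ J → J.card = k → setW W I ≤ setW W J

/-- `W` isolates the size-`k` common independent set `I`: `I` is the unique minimum-weight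
common independent set of size `k`. -/
def Isolates {α : Type*} (M₁ M₂ : Matroid α) (W : α → ℤ) (k : ℕ) (I : Finset α) : Prop :=
  CommonIndep M₁ M₂ I ∧ I.card = k ∧
    ∀ J : Finset α, CommonIndep M₁ M₂ J → J.card = k → J ≠ I → setW W I < setW W J

/-!
Let `σ` be the successor map of a cycle `C` through `s`. Passing from `I` to `I Δ V(C)` keeps
independence in both matroids as soon as some potential `p` drops along every chord: `p v < p u`
whenever `u ≠ v` lie on `C` and `u` is adjacent to `σ v`. Such a chord shortcuts `C` to the cycle
that leaves `u` directly for `σ v`. If the shortcut passes through `s` it has to be heavier than `C`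
(as `C` is a shortest one among the lightest), and if it avoids `s` it has to have weight at least
zero; both say that the weight of the initial segment of `C`, read from `s`, drops weakly from `u`
to `v`, and ties are broken by the position on `C`.

Cycles have nonnegative weight when `I` is of minimum weight: a shortest negative cycle meets the
same conditions, so it would produce a lighter set. For the lower bound, Hall's theorem covers
`I Δ J` by disjoint cycles, of which the one through `s` weighs at least as much as `C` and the
others weigh at least zero.
-/

open Finset

section Exchange

variable {α : Type*} {M M₁ M₂ : Matroid α}

theorem indep_sdiff_union_image {P : Type*} [LinearOrder P] {I : Set α} (hI : M.Indep I)
    {F : Finset α} (hF : ↑F ⊆ I) {x : α → α} (hx : ∀ y ∈ F, x y ∉ I)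
    (hexch : ∀ y ∈ F, M.Indep (insert (x y) (I \ {y}))) (p : α → P)
    (hp : ∀ y ∈ F, ∀ z ∈ F, y ≠ z → M.Indep (insert (x z) (I \ {y})) → p z < p y) :
    M.Indep ((I \ F) ∪ x '' F) := by
  classical
  -- The exchange of the element `a` of least potential comes last: by `hp` all other `x z` lie in
  -- the closure of `I \ {a}`, and `x a` does not.
  induction F using Finset.induction_on_min_value p with
  | empty => simpa using hI
  | insert a F haF hmin ih =>
    simp only [forall_mem_insert, coe_insert, Set.insert_subset_iff] at hF hx hexch hp
    obtain ⟨haI, hFI⟩ := hF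
    have hK : M.Indep ((I \ F) ∪ x '' F) := ih hFI hx.2 hexch.2 fun y hy => (hp.2 y hy).2
    have hIa : M.Indep (I \ {a}) := hI.sdiff _
    have hxa : x a ∉ M.closure (I \ {a}) :=
      ((hIa.insert_indep_iff_of_notMem fun h => hx.1 h.1).1 hexch.1).2
    have hx_closure : ∀ z ∈ F, x z ∈ M.closure (I \ {a}) := fun z hz => by
      by_contra hcl
      have hxE : x z ∈ M.E := (hexch.2 z hz).subset_ground (Set.mem_insert _ _)
      exact (hmin z hz).not_gt <| hp.1.2 z hz (fun h => haF (h ▸ hz)) <|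
        hIa.insert_indep_iff.2 (Or.inl ⟨hxE, hcl⟩)
    have hK_closure : ((I \ F) ∪ x '' F) \ {a} ⊆ M.closure (I \ {a}) := by
      rintro _ ⟨hz | ⟨z, hz, rfl⟩, hza⟩
      · exact M.mem_closure_of_mem ⟨hz.1, hza⟩ hIa.subset_ground
      · exact hx_closure z hz
    have hxK : x a ∉ M.closure (((I \ F) ∪ x '' F) \ {a}) := fun h =>
      hxa (M.closure_subset_closure_of_subset_closure hK_closure h)
    have hxE : x a ∈ M.E := hexch.1.subset_ground (Set.mem_insert _ _)
    refine ((hK.sdiff {a}).insert_indep_iff.2 (Or.inl ⟨hxE, hxK⟩)).subset ?_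
    have hne : ∀ z ∈ F, x z ≠ a := fun z hz h => hx.2 z hz (h ▸ haI)
    simp only [coe_insert, Set.image_insert_eq]
    rintro z (⟨hzI, hzF⟩ | rfl | ⟨y, hy, rfl⟩)
    · exact .inr ⟨.inl ⟨hzI, fun h => hzF (.inr h)⟩, fun h => hzF (.inl h)⟩
    · exact .inl rfl
    · exact .inr ⟨.inr ⟨y, hy, rfl⟩, hne y hy⟩

theorem exists_indep_insert_sdiff_singleton {I B : Set α} (hI : M.Indep I) (hB : B ⊂ I) {x : α}
    (hx : M.Indep (insert x B)) : ∃ y ∈ I \ B, M.Indep (insert x (I \ {y})) := by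
  by_cases hxI : M.Indep (insert x I)
  · obtain ⟨y, hy⟩ := Set.nonempty_of_ssubset hB
    exact ⟨y, hy, hxI.subset (Set.insert_subset_insert Set.sdiff_subset)⟩
  have hx_notMem : x ∉ I := fun h => hxI (by rwa [Set.insert_eq_of_mem h])
  have hx_closure : x ∈ M.closure I := by
    by_contra h
    exact hxI (hI.insert_indep_iff.2 (.inl ⟨hx.subset_ground (Set.mem_insert _ _), h⟩))
  have hcircuit : ¬ M.fundCircuit x I ⊆ insert x B := fun h =>
    (hI.fundCircuit_isCircuit hx_closure hx_notMem).not_indep (hx.subset h)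
  obtain ⟨y, hy, hyB⟩ := Set.not_subset.1 hcircuit
  rw [Set.mem_insert_iff, not_or] at hyB
  refine ⟨y, ⟨(M.fundCircuit_subset_insert x I hy).resolve_left hyB.1, hyB.2⟩, ?_⟩
  rw [Set.insert_sdiff_singleton_comm (Ne.symm hyB.1)]
  exact (hI.mem_fundCircuit_iff hx_closure hx_notMem).1 hy

variable [DecidableEq α]

theorem card_le_card_of_forall_indep_insert_sdiff_singleton {I J A N : Finset α}
    (hI : M.Indep I) (hJ : M.Indep J) (hcard : #J ≤ #I) (hA : A ⊆ J \ I) (hN : N ⊆ I \ J)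
    (hAN : ∀ x ∈ A, ∀ y ∈ I \ J, M.Indep (insert x (↑I \ {y})) → y ∈ N) : #A ≤ #N := by
  by_contra! hlt
  have hlt' : #(I ∩ J ∪ N) < #(I ∩ J ∪ A) := by
    rw [card_union_of_disjoint (by grind [disjoint_left]),
      card_union_of_disjoint (by grind [disjoint_left])]
    exact Nat.add_lt_add_left hlt _
  have hssub : I ∩ J ∪ N ⊂ I := by
    have hIJ : #(J \ I) ≤ #(I \ J) := card_sdiff_le_card_sdiff_iff.2 hcard
    have hne : N ≠ I \ J := fun h => by have := card_le_card hA; grind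
    grind
  obtain ⟨x, hxA, hxN, hx⟩ := (hI.subset (coe_subset.2 hssub.1)).augment_finset
    (hJ.subset (show ↑(I ∩ J ∪ A) ⊆ (J : Set α) by grind)) hlt'
  obtain ⟨y, hy, hxy⟩ := exists_indep_insert_sdiff_singleton hI (coe_ssubset.2 hssub) hx
  grind

theorem exists_injOn_indep_insert_sdiff_singleton {I J : Finset α} (hI : M.Indep I) (hJ : M.Indep J)
    (hcard : #J ≤ #I) :
    ∃ f : α → α, Set.InjOn f ↑(J \ I) ∧
      ∀ x ∈ J \ I, f x ∈ I \ J ∧ M.Indep (insert x (↑I \ {f x})) := by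
  classical
  let t : ↥(J \ I) → Finset α := fun x => {y ∈ I \ J | M.Indep (insert x.1 (↑I \ {y}))}
  have hall : ∀ A : Finset ↥(J \ I), #A ≤ #(A.biUnion t) := fun A => by
    rw [← card_map (.subtype _)]
    refine card_le_card_of_forall_indep_insert_sdiff_singleton hI hJ hcard (map_subtype_subset A)
      (biUnion_subset.2 fun x _ => filter_subset _ _) fun x hx y hy hxy => ?_
    obtain ⟨x, hxA, rfl⟩ := mem_map.1 hx
    exact mem_biUnion.2 ⟨x, hxA, mem_filter.2 ⟨hy, hxy⟩⟩
  obtain ⟨f, hf_inj, hf⟩ := (all_card_le_biUnion_card_iff_exists_injective t).1 hall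
  have hext (x : ↥(J \ I)) : Function.extend (↑) f id (x : α) = f x :=
    Subtype.val_injective.extend_apply f id x
  refine ⟨Function.extend (↑) f id, fun x hx y hy hxy => ?_, fun x hx => ?_⟩
  · rw [hext ⟨x, hx⟩, hext ⟨y, hy⟩] at hxy
    exact congrArg Subtype.val (hf_inj hxy)
  · rw [hext ⟨x, hx⟩]
    exact mem_filter.1 (hf ⟨x, hx⟩)

theorem exchAdj_iff_of_mem {I : Finset α} {u v : α} (hu : u ∈ I) :
    ExchAdj M₁ M₂ I u v ↔ v ∉ I ∧ M₁.Indep (insert v (↑I \ {u})) := by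
  simp [ExchAdj, hu]

theorem exchAdj_iff_of_notMem {I : Finset α} {u v : α} (hu : u ∉ I) :
    ExchAdj M₁ M₂ I u v ↔ v ∈ I ∧ M₂.Indep (insert u (↑I \ {v})) := by
  simp [ExchAdj, hu]

theorem CommonIndep.exists_injOn_exchAdj {I J : Finset α} (hI : CommonIndep M₁ M₂ I)
    (hJ : CommonIndep M₁ M₂ J) (hcard : #I = #J) :
    ∃ f : α → α, Set.InjOn f ↑(symmDiff I J) ∧
      ∀ x ∈ symmDiff I J, f x ∈ symmDiff I J ∧ ExchAdj M₁ M₂ I x (f x) := by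
  obtain ⟨g₁, hg₁_inj, hg₁⟩ := exists_injOn_indep_insert_sdiff_singleton hI.1 hJ.1 hcard.ge
  obtain ⟨g₂, hg₂_inj, hg₂⟩ := exists_injOn_indep_insert_sdiff_singleton hI.2 hJ.2 hcard.ge
  have hg₁_surj : ∀ y ∈ I \ J, ∃ x ∈ J \ I, g₁ x = y :=
    surjOn_of_injOn_of_card_le g₁ (fun x hx => (hg₁ x hx).1) hg₁_inj (card_sdiff_comm hcard).le
  choose! h₁ hh₁ hgh₁ using hg₁_surj
  have hmem {x : α} : x ∈ symmDiff I J ↔ if x ∈ I then x ∈ I \ J else x ∈ J \ I := by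
    grind [mem_symmDiff]
  refine ⟨fun x => if x ∈ I then h₁ x else g₂ x, fun x hx y hy hxy => ?_, fun x hx => ?_⟩
  · rw [mem_coe, hmem] at hx hy
    dsimp only at hxy
    split_ifs at hx hy hxy with hxI hyI hyI
    · rw [← hgh₁ x hx, ← hgh₁ y hy, hxy]
    · grind
    · grind
    · exact hg₂_inj hx hy hxy
  · rw [hmem] at hx
    dsimp only
    split_ifs at hx ⊢ with hxI
    · obtain ⟨hJ', hI'⟩ := mem_sdiff.1 (hh₁ x hx)
      refine ⟨mem_symmDiff.2 (.inr ⟨hJ', hI'⟩), (exchAdj_iff_of_mem hxI).2 ⟨hI', ?_⟩⟩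
      simpa only [hgh₁ x hx] using (hg₁ _ (hh₁ x hx)).2
    · obtain ⟨hI', hJ'⟩ := mem_sdiff.1 (hg₂ x hx).1
      exact ⟨mem_symmDiff.2 (.inl ⟨hI', hJ'⟩),
        (exchAdj_iff_of_notMem hxI).2 ⟨hI', (hg₂ x hx).2⟩⟩

end Exchange

section Cycle

variable {α : Type*} {Adj : α → α → Prop}

theorem isCycle_iff_chain {l : List α} :
    IsCycle Adj l ↔ l ≠ [] ∧ l.Nodup ∧ (l : Cycle α).Chain Adj := by
  cases l with
  | nil => simp [IsCycle]
  | cons a l =>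
    rw [Cycle.chain_coe_cons, ← List.cons_append, List.isChain_append]
    simp only [IsCycle, ne_eq, reduceCtorEq, not_false_eq_true, exists_true_left, List.head_cons,
      List.IsChain.singleton, List.getLast?_eq_getLast_of_ne_nil, Option.mem_def,
      Option.some.injEq, List.head?_cons, forall_eq', true_and]
    tauto

theorem IsCycle.nodup {l : List α} (h : IsCycle Adj l) : l.Nodup :=
  (isCycle_iff_chain.1 h).2.1

theorem IsCycle.rotate {l l' : List α} (h : IsCycle Adj l) (hr : l ~r l') : IsCycle Adj l' := by
  have hl : (l : Cycle α) = l' := Cycle.coe_eq_coe.2 hr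
  rw [isCycle_iff_chain] at h ⊢
  exact ⟨fun h' => h.1 (List.isRotated_nil_iff.1 (h' ▸ hr)), hr.nodup_iff.1 h.2.1, hl ▸ h.2.2⟩

theorem exists_isCycle_of_injOn [DecidableEq α] {T : Finset α} {f : α → α} (hinj : Set.InjOn f T)
    (hf : ∀ x ∈ T, f x ∈ T ∧ Adj x (f x)) {s : α} (hs : s ∈ T) :
    ∃ l : List α, IsCycle Adj l ∧ s ∈ l ∧ l.toFinset ⊆ T ∧
      ∀ x ∈ T \ l.toFinset, f x ∈ T \ l.toFinset := by
  have hmaps : Set.MapsTo f T T := fun x hx => (hf x hx).1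
  have hper : s ∈ Function.periodicPts f := by
    obtain ⟨n, hn, hperiod⟩ := (hmaps.restrict_inj.2 hinj).mem_periodicPts ⟨s, hs⟩
    exact ⟨n, hn, hperiod.map (fun _ => rfl : Function.Semiconj Subtype.val _ f)⟩
  obtain ⟨l, hl⟩ := Quotient.exists_rep (Function.periodicOrbit f s)
  have hmem {x : α} : x ∈ l ↔ ∃ n, f^[n] s = x := by
    rw [← Function.mem_periodicOrbit_iff hper, ← hl]; rfl
  have hiter (n : ℕ) : f^[n] s ∈ T := hmaps.iterate n hs
  refine ⟨l, isCycle_iff_chain.2 ⟨?_, ?_, ?_⟩, hmem.2 ⟨0, rfl⟩, fun x hx => ?_, fun x hx => ?_⟩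
  · exact List.ne_nil_of_mem (hmem.2 ⟨0, rfl⟩)
  · have := Function.nodup_periodicOrbit (f := f) (x := s)
    rwa [← hl] at this
  · change Cycle.Chain Adj ⟦l⟧
    rw [hl, Function.periodicOrbit_chain' _ hper]
    intro n
    rw [Function.iterate_succ_apply']
    exact (hf _ (hiter n)).2
  · obtain ⟨n, rfl⟩ := hmem.1 (List.mem_toFinset.1 hx)
    exact hiter n
  · simp only [mem_sdiff, List.mem_toFinset] at hx ⊢
    refine ⟨hmaps hx.1, fun hfx => hx.2 ?_⟩
    obtain ⟨n, hn⟩ := hmem.1 hfx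
    obtain ⟨m, hm⟩ := Nat.exists_eq_add_one_of_ne_zero
      (Function.minimalPeriod_pos_of_mem_periodicPts hper).ne'
    refine hmem.2 ⟨n + m, hinj (hiter _) hx.1 ?_⟩
    rw [← Function.iterate_succ_apply' f, Nat.succ_eq_add_one, Nat.add_assoc, ← hm,
      Function.iterate_add_minimalPeriod_eq, hn]

theorem sum_nonneg_of_injOn {G : Type*} [AddCommMonoid G] [PartialOrder G] [IsOrderedAddMonoid G]
    {w : α → G} (hw : ∀ l, IsCycle Adj l → 0 ≤ (l.map w).sum) {T : Finset α} {f : α → α}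
    (hinj : Set.InjOn f T) (hf : ∀ x ∈ T, f x ∈ T ∧ Adj x (f x)) : 0 ≤ ∑ x ∈ T, w x := by
  classical
  induction T using Finset.strongInduction with
  | H T ih =>
    obtain rfl | ⟨s, hs⟩ := T.eq_empty_or_nonempty
    · simp
    obtain ⟨l, hl, hsl, hlT, hfl⟩ := exists_isCycle_of_injOn hinj hf hs
    have hrest : 0 ≤ ∑ x ∈ T \ l.toFinset, w x :=
      ih _ (sdiff_ssubset hlT ⟨s, List.mem_toFinset.2 hsl⟩)
        (hinj.mono (coe_subset.2 sdiff_subset))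
        fun x hx => ⟨hfl x hx, (hf x (mem_sdiff.1 hx).1).2⟩
    rw [← sum_sdiff hlT, List.sum_toFinset _ hl.nodup]
    exact add_nonneg hrest (hw l hl)

variable [DecidableEq α]

theorem formPerm_cons_self {x : α} {l : List α} (h : (x :: l).Nodup) :
    (x :: l).formPerm x = (l ++ [x]).head (by simp) := by
  cases l with
  | nil => simp
  | cons y l => exact List.formPerm_apply_head x y l h

theorem IsCycle.adj_formPerm {l : List α} (h : IsCycle Adj l) {x : α} (hx : x ∈ l) :
    Adj x (l.formPerm x) := by
  obtain ⟨A, B, rfl⟩ := List.append_of_mem hx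
  have hrot : A ++ x :: B ~r x :: (B ++ A) := List.isRotated_append
  have h' := h.rotate hrot
  rw [List.formPerm_eq_of_isRotated h.nodup hrot, formPerm_cons_self h'.nodup]
  have hchain := (isCycle_iff_chain.1 h').2.2
  rw [Cycle.chain_coe_cons] at hchain
  exact hchain.rel_head? (List.head_mem_head? _)

theorem IsCycle.shortcut {l P Q : List α} {u v : α} (h : IsCycle Adj l)
    (hr : l ~r u :: (P ++ v :: Q)) (hadj : Adj u (l.formPerm v)) : IsCycle Adj (u :: Q) := by
  have hr' : l ~r v :: (Q ++ u :: P) := hr.trans (List.isRotated_append (l := u :: P))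
  rw [List.formPerm_eq_of_isRotated h.nodup hr', formPerm_cons_self (h.rotate hr').nodup] at hadj
  replace h := isCycle_iff_chain.1 (h.rotate hr)
  rw [Cycle.chain_coe_cons] at h
  have hsub : (u :: Q).Sublist (u :: (P ++ v :: Q)) := by simp
  have hsuffix : Q ++ [u] <:+ u :: (P ++ v :: Q ++ [u]) := ⟨u :: (P ++ [v]), by simp⟩
  rw [isCycle_iff_chain, Cycle.chain_coe_cons]
  refine ⟨List.cons_ne_nil _ _, h.2.1.sublist hsub,
    (h.2.2.suffix hsuffix).cons_of_ne_nil (by simp) ?_⟩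
  convert hadj using 1
  simp [List.head_append]

end Cycle

section Potential

variable {α : Type*}

/-- The potential of a vertex `x` of a cycle listed as `l`, used to order the exchanges along the
cycle: the total weight of the initial segment of `l` that ends with `x`, with ties broken by the
position of `x` in `l`. -/
def cyclePotential {G : Type*} [AddMonoid G] [DecidableEq α] (w : α → G) (l : List α) (x : α) :
    G ×ₗ ℕ :=
  toLex (((l.take (l.idxOf x + 1)).map w).sum, l.idxOf x)

theorem exists_eq_append_of_mem_of_ne {l : List α} {u v : α} (hu : u ∈ l) (hv : v ∈ l)
    (huv : u ≠ v) :
    ∃ A B D, l = A ++ u :: (B ++ v :: D) ∨ l = A ++ v :: (B ++ u :: D) := by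
  obtain ⟨A, D, rfl⟩ := List.append_of_mem hu
  obtain hvA | hvD : v ∈ A ∨ v ∈ D := by simpa [huv.symm] using hv
  · obtain ⟨A, B, rfl⟩ := List.append_of_mem hvA
    exact ⟨A, B, D, .inr (by simp)⟩
  · obtain ⟨B, D, rfl⟩ := List.append_of_mem hvD
    exact ⟨A, B, D, .inl rfl⟩

variable [DecidableEq α] {G : Type*} {w : α → G}

theorem cyclePotential_append_cons [AddMonoid G] {A B : List α} {x : α} (hx : x ∉ A) :
    cyclePotential w (A ++ x :: B) x = toLex ((A.map w).sum + w x, A.length) := by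
  simp [cyclePotential, List.idxOf_append_of_notMem hx, List.take_append, List.take_of_length_le]

theorem cyclePotential_append_cons_append_cons [AddMonoid G] {A B D : List α} {x y : α}
    (hy : y ∉ A ++ x :: B) :
    cyclePotential w (A ++ x :: (B ++ y :: D)) y =
      toLex ((A.map w).sum + w x + ((B.map w).sum + w y), A.length + (B.length + 1)) := by
  have h := cyclePotential_append_cons (w := w) (B := D) hy
  simpa [add_assoc] using h

theorem IsCycle.cyclePotential_lt_of_adj [AddCommGroup G] [LinearOrder G] [IsOrderedAddMonoid G]
    {Adj : α → α → Prop} {l : List α} {s u v : α} (hl : IsCycle Adj (s :: l))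
    (hthrough : ∀ l', IsCycle Adj l' → s ∈ l' → l'.length < (s :: l).length →
      ((s :: l).map w).sum < (l'.map w).sum)
    (havoid : ∀ l', IsCycle Adj l' → s ∉ l' → l'.length < (s :: l).length → 0 ≤ (l'.map w).sum)
    (hu : u ∈ s :: l) (hv : v ∈ s :: l) (huv : u ≠ v) (hadj : Adj u ((s :: l).formPerm v)) :
    cyclePotential w (s :: l) v < cyclePotential w (s :: l) u := by
  have hnodup := hl.nodup
  have hhead {x : α} {A B : List α} (h : s :: l = A ++ x :: B) : s = x ∨ s ∈ A := by
    cases A <;> simp_all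
  obtain ⟨A, B, D, h | h⟩ := exists_eq_append_of_mem_of_ne hu hv huv
  · have hs : s ∈ u :: (D ++ A) := by have := hhead h; grind
    have hr : s :: l ~r u :: (B ++ v :: (D ++ A)) := by
      simpa [h] using List.isRotated_append (l := A) (l' := u :: (B ++ v :: D))
    have hlt := hthrough _ (hl.shortcut hr hadj) hs (by simp [h]; omega)
    have hneg : (B.map w).sum + w v < 0 := by
      rw [h] at hlt
      simp only [List.map_append, List.map_cons, List.sum_append, List.sum_cons] at hlt
      grind
    rw [h] at hnodup ⊢
    rw [cyclePotential_append_cons (by grind), cyclePotential_append_cons_append_cons (by grind),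
      Prod.Lex.toLex_lt_toLex]
    exact .inl (add_lt_of_neg_right _ hneg)
  · have hs : s ∉ u :: B := by have := hhead h; grind
    have hr : s :: l ~r u :: (D ++ A ++ v :: B) := by
      simpa [h] using List.isRotated_append (l := A ++ v :: B) (l' := u :: D)
    have hnonneg : 0 ≤ (B.map w).sum + w u := by
      simpa [add_comm] using havoid _ (hl.shortcut hr hadj) hs (by simp [h]; omega)
    rw [h] at hnodup ⊢
    rw [cyclePotential_append_cons (by grind), cyclePotential_append_cons_append_cons (by grind),
      Prod.Lex.toLex_lt_toLex]
    obtain hzero | hpos := hnonneg.eq_or_lt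
    · exact .inr ⟨by simp [← hzero], by simp⟩
    · exact .inl (lt_add_of_pos_right _ hpos)

end Potential

section SymmDiff

variable {α : Type*} [DecidableEq α] {M M₁ M₂ : Matroid α} {I T : Finset α} {σ : Equiv.Perm α}
  {P : Type*} [LinearOrder P]

theorem image_inter_eq_sdiff_of_swap (hσT : ∀ x, σ x ∈ T ↔ x ∈ T)
    (hσI : ∀ x ∈ T, σ x ∈ I ↔ x ∉ I) : (I ∩ T).image σ = T \ I := by
  ext x
  obtain ⟨x, rfl⟩ := σ.surjective x
  have := hσI x
  simp only [mem_image, σ.injective.eq_iff, exists_eq_right, mem_inter, mem_sdiff, hσT]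
  tauto

theorem card_symmDiff_of_swap (hσT : ∀ x, σ x ∈ T ↔ x ∈ T)
    (hσI : ∀ x ∈ T, σ x ∈ I ↔ x ∉ I) : #(symmDiff I T) = #I := by
  rw [Finset.symmDiff_def, card_union_of_disjoint disjoint_sdiff_sdiff,
    ← image_inter_eq_sdiff_of_swap hσT hσI, card_image_of_injective _ σ.injective,
    card_sdiff_add_card_inter]

theorem indep_symmDiff_of_swap (hI : M.Indep I) (hσT : ∀ x, σ x ∈ T ↔ x ∈ T)
    (hσI : ∀ x ∈ T, σ x ∈ I ↔ x ∉ I)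
    (hexch : ∀ y ∈ I ∩ T, M.Indep (insert (σ y) (↑I \ {y}))) (p : α → P)
    (hp : ∀ y ∈ I ∩ T, ∀ z ∈ I ∩ T, y ≠ z → M.Indep (insert (σ z) (↑I \ {y})) → p z < p y) :
    M.Indep ↑(symmDiff I T) := by
  have h := indep_sdiff_union_image hI (coe_subset.2 inter_subset_left)
    (fun y hy => by simpa using (hσI y (mem_inter.1 hy).2).not_left.2 (mem_inter.1 hy).1) hexch p hp
  rwa [← coe_image, image_inter_eq_sdiff_of_swap hσT hσI, ← coe_sdiff, sdiff_inter_self_left,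
    ← coe_union] at h

theorem CommonIndep.symmDiff_of_perm (hI : CommonIndep M₁ M₂ I) (hσT : ∀ x, σ x ∈ T ↔ x ∈ T)
    (hadj : ∀ x ∈ T, ExchAdj M₁ M₂ I x (σ x)) (p : α → P)
    (hp : ∀ u ∈ T, ∀ v ∈ T, u ≠ v → ExchAdj M₁ M₂ I u (σ v) → p v < p u) :
    CommonIndep M₁ M₂ (symmDiff I T) ∧ #(symmDiff I T) = #I := by
  have hσI : ∀ x ∈ T, σ x ∈ I ↔ x ∉ I := fun x hx => by have := hadj x hx; grind [ExchAdj]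
  have hσT' (x : α) : σ.symm x ∈ T ↔ x ∈ T := by rw [← hσT, Equiv.apply_symm_apply]
  have hσI' : ∀ x ∈ T, σ.symm x ∈ I ↔ x ∉ I := fun x hx => by
    have := hσI _ ((hσT' x).2 hx)
    rw [Equiv.apply_symm_apply] at this
    tauto
  refine ⟨⟨indep_symmDiff_of_swap hI.1 hσT hσI (fun y hy => ?_) p fun y hy z hz hyz h => ?_,
    indep_symmDiff_of_swap hI.2 hσT' hσI' (fun y hy => ?_) (OrderDual.toDual ∘ p ∘ σ.symm)
      fun y hy z hz hyz h => ?_⟩, card_symmDiff_of_swap hσT hσI⟩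
  all_goals simp only [mem_inter] at *
  · exact ((exchAdj_iff_of_mem hy.1).1 (hadj y hy.2)).2
  · exact hp y hy.2 z hz.2 hyz ((exchAdj_iff_of_mem hy.1).2 ⟨by grind, h⟩)
  · have h := hadj _ ((hσT' y).2 hy.2)
    rw [Equiv.apply_symm_apply] at h
    exact ((exchAdj_iff_of_notMem (by grind)).1 h).2
  · refine hp _ ((hσT' z).2 hz.2) _ ((hσT' y).2 hy.2) (fun h => hyz (σ.symm.injective h).symm) ?_
    rw [Equiv.apply_symm_apply]
    exact (exchAdj_iff_of_notMem (by grind)).2 ⟨hy.1, h⟩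

theorem CommonIndep.symmDiff_of_isCycle {G : Type*} [AddCommGroup G] [LinearOrder G]
    [IsOrderedAddMonoid G] {w : α → G} {C : List α} {s : α}
    (hI : CommonIndep M₁ M₂ I) (hC : IsCycle (ExchAdj M₁ M₂ I) C) (hsC : s ∈ C)
    (hthrough : ∀ C', IsCycle (ExchAdj M₁ M₂ I) C' → s ∈ C' → C'.length < C.length →
      (C.map w).sum < (C'.map w).sum)
    (havoid : ∀ C', IsCycle (ExchAdj M₁ M₂ I) C' → s ∉ C' → C'.length < C.length →
      0 ≤ (C'.map w).sum) :
    CommonIndep M₁ M₂ (symmDiff I C.toFinset) ∧ #(symmDiff I C.toFinset) = #I := by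
  obtain ⟨A, B, rfl⟩ := List.append_of_mem hsC
  have hr : A ++ s :: B ~r s :: (B ++ A) := List.isRotated_append
  rw [List.toFinset_eq_of_perm _ _ hr.perm]
  rw [hr.perm.length_eq] at hthrough havoid
  rw [(hr.perm.map w).sum_eq] at hthrough
  replace hC := hC.rotate hr
  refine hI.symmDiff_of_perm (σ := (s :: (B ++ A)).formPerm) (fun x => ?_)
    (fun x hx => hC.adj_formPerm (List.mem_toFinset.1 hx)) (cyclePotential w (s :: (B ++ A)))
    fun u hu v hv => hC.cyclePotential_lt_of_adj hthrough havoid (List.mem_toFinset.1 hu)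
      (List.mem_toFinset.1 hv)
  simp only [List.mem_toFinset, List.formPerm_mem_iff_mem]

end SymmDiff

section Weight

variable {α : Type*} [DecidableEq α] {M₁ M₂ : Matroid α} {W : α → ℤ} {k : ℕ} {I : Finset α}

theorem setW_symmDiff (W : α → ℤ) (I T : Finset α) :
    setW W (symmDiff I T) = setW W I + ∑ x ∈ T, exchWt W I x := by
  have hT : ∑ x ∈ T, exchWt W I x = -∑ x ∈ T ∩ I, W x + ∑ x ∈ T \ I, W x := by
    rw [← sum_neg_distrib, ← sum_piecewise]
    rfl
  rw [hT, setW, setW, Finset.symmDiff_def, sum_union disjoint_sdiff_sdiff, inter_comm,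
    ← sum_inter_add_sum_sdiff I T]
  ring

theorem listW_eq_sum_toFinset {l : List α} (hl : l.Nodup) :
    listW W I l = ∑ x ∈ l.toFinset, exchWt W I x :=
  (List.sum_toFinset _ hl).symm

theorem IsMinWtOfSize.listW_nonneg (hI : IsMinWtOfSize M₁ M₂ W k I) {l : List α}
    (hl : IsCycle (ExchAdj M₁ M₂ I) l) : 0 ≤ listW W I l := by
  induction hn : l.length using Nat.strong_induction_on generalizing l with
  | _ n ih =>
    subst hn
    by_contra! hneg
    have hshort {l'} (hl' : IsCycle (ExchAdj M₁ M₂ I) l') (hlt : l'.length < l.length) :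
        0 ≤ listW W I l' := ih _ hlt hl' rfl
    obtain ⟨s, hs⟩ := List.exists_mem_of_ne_nil l hl.1
    obtain ⟨hJ, hcard⟩ := hI.1.symmDiff_of_isCycle hl hs
      (fun l' hl' _ hlt => hneg.trans_le (hshort hl' hlt)) fun l' hl' _ hlt => hshort hl' hlt
    have hle := hI.2.2 _ hJ (hcard.trans hI.2.1)
    rw [setW_symmDiff, ← listW_eq_sum_toFinset hl.nodup] at hle
    linarith

theorem IsMinWtOfSize.exists_isCycle_listW_le (hI : IsMinWtOfSize M₁ M₂ W k I) {J : Finset α}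
    (hJ : CommonIndep M₁ M₂ J) (hcard : #J = k) {s : α} (hs : s ∈ symmDiff I J) :
    ∃ l, IsCycle (ExchAdj M₁ M₂ I) l ∧ s ∈ l ∧ setW W I + listW W I l ≤ setW W J := by
  obtain ⟨f, hinj, hf⟩ := hI.1.exists_injOn_exchAdj hJ (hI.2.1.trans hcard.symm)
  obtain ⟨l, hl, hsl, hlT, hfl⟩ := exists_isCycle_of_injOn hinj hf hs
  have hrest : 0 ≤ ∑ x ∈ symmDiff I J \ l.toFinset, exchWt W I x :=
    sum_nonneg_of_injOn (fun l hl => hI.listW_nonneg hl)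
      (hinj.mono (coe_subset.2 sdiff_subset)) fun x hx => ⟨hfl x hx, (hf x (mem_sdiff.1 hx).1).2⟩
  refine ⟨l, hl, hsl, ?_⟩
  calc setW W I + listW W I l ≤ setW W I + ∑ x ∈ symmDiff I J, exchWt W I x := by
        rw [listW_eq_sum_toFinset hl.nodup, ← sum_sdiff hlT]
        linarith
    _ = setW W J := by rw [← setW_symmDiff, symmDiff_symmDiff_cancel_left]

end Weight

theorem Isolates.isMinWtOfSize {α : Type*} {M₁ M₂ : Matroid α} {W : α → ℤ} {k : ℕ} {I : Finset α}
    (hI : Isolates M₁ M₂ W k I) : IsMinWtOfSize M₁ M₂ W k I := by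
  refine ⟨hI.1, hI.2.1, fun J hJ hcard => ?_⟩
  obtain rfl | hne := eq_or_ne J I
  · exact le_rfl
  · exact (hI.2.2 J hJ hcard hne).le

theorem symmDiff_minCycle_is_min_general {α : Type*} [DecidableEq α]
    (M₁ M₂ : Matroid α) (W : α → ℤ) (k : ℕ) (Ik : Finset α) (hmin : IsMinWtOfSize M₁ M₂ W k Ik)
    (s : α) (C : List α) (hC : IsCycle (ExchAdj M₁ M₂ Ik) C) (hsC : s ∈ C)
    (hCmin : ∀ C' : List α, IsCycle (ExchAdj M₁ M₂ Ik) C' → s ∈ C' →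
      listW W Ik C ≤ listW W Ik C')
    (hClen : ∀ C' : List α, IsCycle (ExchAdj M₁ M₂ Ik) C' → s ∈ C' →
      listW W Ik C' = listW W Ik C → C.length ≤ C'.length) :
    CommonIndep M₁ M₂ (symmDiff Ik C.toFinset) ∧ (symmDiff Ik C.toFinset).card = k ∧
    IsLeast {w : ℤ | ∃ I : Finset α, CommonIndep M₁ M₂ I ∧ I.card = k ∧
        s ∈ symmDiff I Ik ∧ setW W I = w}
      (setW W (symmDiff Ik C.toFinset)) := by
  have hthrough (C' : List α) (hC' : IsCycle (ExchAdj M₁ M₂ Ik) C') (hs : s ∈ C')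
      (hlt : C'.length < C.length) : listW W Ik C < listW W Ik C' :=
    (hCmin C' hC' hs).lt_of_ne fun heq => hlt.not_ge (hClen C' hC' hs heq.symm)
  obtain ⟨hindep, hcard⟩ := hmin.1.symmDiff_of_isCycle hC hsC hthrough
    fun C' hC' _ _ => hmin.listW_nonneg hC'
  rw [hmin.2.1] at hcard
  refine ⟨hindep, hcard, ⟨_, hindep, hcard, ?_, rfl⟩, ?_⟩
  · rwa [symmDiff_comm, symmDiff_symmDiff_cancel_left, List.mem_toFinset]
  · rintro _ ⟨J, hJ, hJcard, hsJ, rfl⟩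
    obtain ⟨l, hl, hsl, hle⟩ :=
      hmin.exists_isCycle_listW_le hJ hJcard (symmDiff_comm J Ik ▸ hsJ)
    rw [setW_symmDiff, ← listW_eq_sum_toFinset hC.nodup]
    linarith [hCmin l hl hsl]

/-- Suppose `W` isolates a size-`k` common independent set `I_k`, `s ∈ S`, and `C*` is a
directed cycle through `s` in `𝓔(M₁,M₂,I_k)` of minimum weight, of minimum hop-length among
the minimum-weight directed cycles through `s`. Then `I_k Δ V(C*)` is a size-`k` common
independent set attaining the minimum of `W(I)` over all size-`k` common independent sets
`I` with `s ∈ I Δ I_k`. -/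
theorem symmDiff_minCycle_is_min {α : Type*} [Fintype α] [DecidableEq α]
    (M₁ M₂ : Matroid α) (hE₁ : M₁.E = Set.univ) (hE₂ : M₂.E = Set.univ)
    (W : α → ℤ) (k : ℕ) (Ik : Finset α) (hiso : Isolates M₁ M₂ W k Ik)
    (s : α) (C : List α) (hC : IsCycle (ExchAdj M₁ M₂ Ik) C) (hsC : s ∈ C)
    (hCmin : ∀ C' : List α, IsCycle (ExchAdj M₁ M₂ Ik) C' → s ∈ C' →
      listW W Ik C ≤ listW W Ik C')
    (hClen : ∀ C' : List α, IsCycle (ExchAdj M₁ M₂ Ik) C' → s ∈ C' →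
      listW W Ik C' = listW W Ik C → C.length ≤ C'.length) :
    CommonIndep M₁ M₂ (symmDiff Ik C.toFinset) ∧ (symmDiff Ik C.toFinset).card = k ∧
    IsLeast {w : ℤ | ∃ I : Finset α, CommonIndep M₁ M₂ I ∧ I.card = k ∧
        s ∈ symmDiff I Ik ∧ setW W I = w}
      (setW W (symmDiff Ik C.toFinset)) :=
  symmDiff_minCycle_is_min_general M₁ M₂ W k Ik hiso.isMinWtOfSize s C hC hsC hCmin hClen
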